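/- There exists an absolute constant C > 0 such that R(f*_{(ℓ,𝒵)-fair}) − R(f̃) ≤ C A² / K, where f*_{(ℓ,𝒵)-fair} is the risk-minimizer of R over (ℓ,𝒵)-fair predictors in the discretized class ℱ_K and f̃ is the risk-minimizer of R over (ℓ,𝒵)-fair predictors in the continuous class ℱ. In particular R(f*_{(ℓ,𝒵)-fair}) → R(f̃) as K → +∞. -/

import Mathlib

open MeasureTheory ProbabilityTheory Filter Function

noncomputable section

namespace FairReg

/-- The regular grid `𝒴_K = {y_k = -A + 2A(k-1)/(K-1)}` of `[-A, A]` with `K` points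
(indexed here by `k ∈ {0, …, K-1}`). -/
def grid (A : ℝ) (K : ℕ) : Finset ℝ :=
  (Finset.range K).image (fun k : ℕ => -A + 2 * A * (k : ℝ) / ((K : ℝ) - 1))

/-- Maximum of `g` over a finite set `t` of reals, `max_{y ∈ t} g y`
(realized as the supremum of the image). -/
def gmax (t : Finset ℝ) (g : ℝ → ℝ) : ℝ := sSup (g '' (t : Set ℝ))

/-- Projection (clamp) `Π_{[-A,A]}` onto the interval `[-A, A]`. -/
def clamp (A t : ℝ) : ℝ := max (-A) (min A t)

/-- The indicator vector `a(y) = (1{y ≤ z_1}, …, 1{y ≤ z_M})`. -/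
def aInd {M : ℕ} (z : Fin M → ℝ) (y : ℝ) (m : Fin M) : ℝ := if y ≤ z m then 1 else 0

/-- Conditional probability `ℙ_s(E) = ℙ(E | S = s)`. -/
def condProb {Ω 𝒮 : Type*} [MeasurableSpace Ω] (μ : Measure Ω) (S : Ω → 𝒮) (s : 𝒮)
    (E : Set Ω) : ℝ := (μ[|S ⁻¹' {s}] E).toReal

/-- The (population) squared risk `R(f) = 𝔼[(Y - f(X,S))²]`. -/
def risk {Ω 𝒮 : Type*} [MeasurableSpace Ω] {d : ℕ} (μ : Measure Ω)
    (X : Ω → Fin d → ℝ) (S : Ω → 𝒮) (Y : Ω → ℝ) (f : (Fin d → ℝ) → 𝒮 → ℝ) : ℝ :=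
  ∫ ω, (Y ω - f (X ω) (S ω)) ^ 2 ∂μ

end FairReg

/-!
The constraint sees a predictor `f` only through the events `{f ≤ z_m}`. Since every threshold is a
grid point, rounding `f` up to the grid changes none of these events, so it turns a fair predictor
into a fair grid-valued one. Rounding moves `f` by at most the mesh `2A/(K-1)`, and the squared loss
is `4A`-Lipschitz in the prediction on `[-A, A]`, so the risk grows by at most
`8A²/(K-1) ≤ 16A²/K`. Conversely grid-valued predictors are `[-A, A]`-valued, so discretizing cannot
lower the optimal risk.
-/

namespace FairReg

section Rounding

variable {a h y : ℝ}

/-- The least point of the progression `a, a + h, a + 2h, …` that is at least `y`, for `0 < h`;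
points `y < a` are sent to `a`. -/
def roundUp (a h y : ℝ) : ℝ := a + h * ⌈(y - a) / h⌉₊

lemma measurable_roundUp (a h : ℝ) : Measurable (roundUp a h) :=
  ((measurable_from_nat.comp (Nat.measurable_ceil.comp
    ((measurable_id.sub_const a).div_const h))).const_mul h).const_add a

lemma roundUp_le_iff (hh : 0 < h) {k : ℕ} : roundUp a h y ≤ a + h * k ↔ y ≤ a + h * k := by
  rw [roundUp, add_le_add_iff_left, mul_le_mul_iff_right₀ hh, Nat.cast_le, Nat.ceil_le,
    div_le_iff₀' hh, sub_le_iff_le_add']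

lemma abs_roundUp_sub_le (hh : 0 < h) (hy : a ≤ y) : |roundUp a h y - y| ≤ h := by
  have hlower : (y - a) / h ≤ ⌈(y - a) / h⌉₊ := Nat.le_ceil _
  have hupper : (⌈(y - a) / h⌉₊ : ℝ) < (y - a) / h + 1 :=
    Nat.ceil_lt_add_one (div_nonneg (sub_nonneg.2 hy) hh.le)
  have hscale : roundUp a h y - y = h * (⌈(y - a) / h⌉₊ - (y - a) / h) := by
    rw [roundUp, mul_sub, mul_div_cancel₀ _ hh.ne']
    ring
  rw [hscale, abs_of_nonneg (mul_nonneg hh.le (sub_nonneg.2 hlower))]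
  exact mul_le_of_le_one_right hh.le (by linarith)

end Rounding

section Grid

variable {A y : ℝ} {K : ℕ}

/-- The distance `2A/(K-1)` between neighbouring points of `grid A K`, for `2 ≤ K`. -/
def mesh (A : ℝ) (K : ℕ) : ℝ := 2 * A / ((K : ℝ) - 1)

lemma mem_grid_iff : y ∈ grid A K ↔ ∃ k < K, -A + mesh A K * k = y := by
  simp only [grid, mesh, Finset.mem_image, Finset.mem_range, mul_div_right_comm]

lemma cast_sub_one_pos (hK : 2 ≤ K) : (0 : ℝ) < (K : ℝ) - 1 :=
  sub_pos.2 (Nat.one_lt_cast.2 hK)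

lemma mesh_pos (hA : 0 < A) (hK : 2 ≤ K) : 0 < mesh A K :=
  div_pos (by positivity) (cast_sub_one_pos hK)

lemma mesh_mul_pred (hK : 2 ≤ K) : mesh A K * ((K - 1 : ℕ) : ℝ) = 2 * A := by
  rw [Nat.cast_pred (by omega), mesh, div_mul_cancel₀ _ (cast_sub_one_pos hK).ne']

lemma mesh_le_four_mul_div (hA : 0 < A) (hK : 2 ≤ K) : mesh A K ≤ 4 * A / K := by
  have hK' : (2 : ℝ) ≤ K := by exact_mod_cast hK
  rw [mesh, div_le_div_iff₀ (cast_sub_one_pos hK) (by positivity)]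
  nlinarith

lemma grid_subset_Icc (hA : 0 < A) (hK : 2 ≤ K) : (grid A K : Set ℝ) ⊆ Set.Icc (-A) A := by
  intro y hy
  obtain ⟨k, hk, rfl⟩ := mem_grid_iff.1 hy
  have hlast : mesh A K * k ≤ mesh A K * ((K - 1 : ℕ) : ℝ) :=
    mul_le_mul_of_nonneg_left (by exact_mod_cast Nat.le_sub_one_of_lt hk) (mesh_pos hA hK).le
  rw [mesh_mul_pred hK] at hlast
  have hfirst : 0 ≤ mesh A K * k := mul_nonneg (mesh_pos hA hK).le k.cast_nonneg
  constructor <;> linarith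

lemma roundUp_mem_grid (hA : 0 < A) (hK : 2 ≤ K) (hy : y ≤ A) :
    roundUp (-A) (mesh A K) y ∈ grid A K := by
  have hceil : ⌈(y - -A) / mesh A K⌉₊ ≤ K - 1 := by
    rw [Nat.ceil_le, div_le_iff₀' (mesh_pos hA hK), mesh_mul_pred hK]
    linarith
  exact mem_grid_iff.2 ⟨_, by omega, rfl⟩

lemma roundUp_le_iff_of_mem_grid (hA : 0 < A) (hK : 2 ≤ K) {z : ℝ} (hz : z ∈ grid A K) :
    roundUp (-A) (mesh A K) y ≤ z ↔ y ≤ z := by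
  obtain ⟨k, -, rfl⟩ := mem_grid_iff.1 hz
  exact roundUp_le_iff (mesh_pos hA hK)

end Grid

section Constraint

variable {T ι : Type*} [MeasurableSpace T] {z : ι → ℝ} {𝒞 : Set (ι → Set T)}

/-- The measurable predictors `f : T → ℝ` with values in `V` whose family of sublevel sets
`{f ≤ z i}` belongs to `𝒞`. Encoding a constraint as a set `𝒞` of families of events records that it
depends on `f` only through the sublevel sets at the thresholds. -/
def constrainedPredictors (V : Set ℝ) (z : ι → ℝ) (𝒞 : Set (ι → Set T)) : Set (T → ℝ) :=
  {f | Measurable f ∧ (∀ t, f t ∈ V) ∧ (fun i => {t | f t ≤ z i}) ∈ 𝒞}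

lemma constrainedPredictors_mono {V W : Set ℝ} (hVW : V ⊆ W) :
    constrainedPredictors V z 𝒞 ⊆ constrainedPredictors W z 𝒞 :=
  fun _ ⟨hf, hfV, hf𝒞⟩ => ⟨hf, fun t => hVW (hfV t), hf𝒞⟩

lemma roundUp_comp_mem_constrainedPredictors {A : ℝ} (hA : 0 < A) {K : ℕ} (hK : 2 ≤ K)
    (hz : ∀ i, z i ∈ grid A K) {f : T → ℝ}
    (hf : f ∈ constrainedPredictors (Set.Icc (-A) A) z 𝒞) :
    roundUp (-A) (mesh A K) ∘ f ∈ constrainedPredictors (grid A K : Set ℝ) z 𝒞 := by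
  obtain ⟨hfm, hfA, hf𝒞⟩ := hf
  refine ⟨(measurable_roundUp _ _).comp hfm, fun t => roundUp_mem_grid hA hK (hfA t).2, ?_⟩
  simpa only [comp_apply, roundUp_le_iff_of_mem_grid hA hK (hz _)] using hf𝒞

end Constraint

section Risk

variable {Ω T ι : Type*} [MeasurableSpace Ω] {μ : Measure Ω} {Y : Ω → ℝ} {A : ℝ}

lemma sq_sub_sub_sq_sub_le {y u v δ : ℝ} (hy : |y| ≤ A) (hu : |u| ≤ A) (hv : |v| ≤ A)
    (huv : |v - u| ≤ δ) : (y - v) ^ 2 - (y - u) ^ 2 ≤ 4 * A * δ := by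
  have hsum : |v + u - 2 * y| ≤ 4 * A := by
    rw [abs_le] at hy hu hv ⊢
    constructor <;> linarith
  calc (y - v) ^ 2 - (y - u) ^ 2 = (v + u - 2 * y) * (v - u) := by ring
    _ ≤ |v + u - 2 * y| * |v - u| := (le_abs_self _).trans_eq (abs_mul _ _)
    _ ≤ 4 * A * δ := mul_le_mul hsum huv (abs_nonneg _) ((abs_nonneg _).trans hsum)

lemma integrable_sq_sub [IsFiniteMeasure μ] {U : Ω → ℝ} (hY : AEMeasurable Y μ)
    (hU : AEMeasurable U μ) (hYA : ∀ᵐ ω ∂μ, |Y ω| ≤ A) (hUA : ∀ᵐ ω ∂μ, |U ω| ≤ A) :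
    Integrable (fun ω => (Y ω - U ω) ^ 2) μ :=
  ((MemLp.of_bound hY.aestronglyMeasurable A hYA).sub
    (MemLp.of_bound hU.aestronglyMeasurable A hUA)).integrable_sq

lemma integral_sq_sub_sub_integral_sq_sub_le [IsProbabilityMeasure μ] {U V : Ω → ℝ}
    (hY : AEMeasurable Y μ) (hU : AEMeasurable U μ) (hV : AEMeasurable V μ)
    (hYA : ∀ᵐ ω ∂μ, |Y ω| ≤ A) (hUA : ∀ᵐ ω ∂μ, |U ω| ≤ A) (hVA : ∀ᵐ ω ∂μ, |V ω| ≤ A)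
    {δ : ℝ} (hUV : ∀ᵐ ω ∂μ, |V ω - U ω| ≤ δ) :
    ∫ ω, (Y ω - V ω) ^ 2 ∂μ - ∫ ω, (Y ω - U ω) ^ 2 ∂μ ≤ 4 * A * δ := by
  have hintV := integrable_sq_sub hY hV hYA hVA
  have hintU := integrable_sq_sub hY hU hYA hUA
  calc ∫ ω, (Y ω - V ω) ^ 2 ∂μ - ∫ ω, (Y ω - U ω) ^ 2 ∂μ
      = ∫ ω, ((Y ω - V ω) ^ 2 - (Y ω - U ω) ^ 2) ∂μ := (integral_sub hintV hintU).symm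
    _ ≤ ∫ _, 4 * A * δ ∂μ := by
      refine integral_mono_ae (hintV.sub hintU) (integrable_const _) ?_
      filter_upwards [hYA, hUA, hVA, hUV] with ω hy hu hv huv
      exact sq_sub_sub_sq_sub_le hy hu hv huv
    _ = 4 * A * δ := by simp

/-- The squared risk `𝔼[(Y - f(X))²]` of a predictor on an arbitrary feature space; `risk` is the
case of the feature `(X, S)`. -/
def squaredRisk (μ : Measure Ω) (X : Ω → T) (Y : Ω → ℝ) (f : T → ℝ) : ℝ :=
  ∫ ω, (Y ω - f (X ω)) ^ 2 ∂μ

variable [MeasurableSpace T] {X : Ω → T} {z : ι → ℝ} {𝒞 : Set (ι → Set T)}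

lemma squaredRisk_roundUp_comp_le [IsProbabilityMeasure μ] (hX : AEMeasurable X μ)
    (hY : AEMeasurable Y μ) (hA : 0 < A) (hYA : ∀ᵐ ω ∂μ, |Y ω| ≤ A) {K : ℕ} (hK : 2 ≤ K)
    {f : T → ℝ} (hf : Measurable f) (hfA : ∀ t, f t ∈ Set.Icc (-A) A) :
    squaredRisk μ X Y (roundUp (-A) (mesh A K) ∘ f) ≤ squaredRisk μ X Y f + 16 * A ^ 2 / K := by
  have hgm := (measurable_roundUp (-A) (mesh A K)).comp hf
  have hgA : ∀ t, roundUp (-A) (mesh A K) (f t) ∈ Set.Icc (-A) A :=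
    fun t => grid_subset_Icc hA hK (roundUp_mem_grid hA hK (hfA t).2)
  have hcost := integral_sq_sub_sub_integral_sq_sub_le hY (hf.comp_aemeasurable hX)
    (hgm.comp_aemeasurable hX) hYA (.of_forall fun ω => abs_le.2 (hfA (X ω)))
    (.of_forall fun ω => abs_le.2 (hgA (X ω)))
    (.of_forall fun ω => abs_roundUp_sub_le (mesh_pos hA hK) (hfA (X ω)).1)
  rw [← sub_le_iff_le_add']
  calc squaredRisk μ X Y (roundUp (-A) (mesh A K) ∘ f) - squaredRisk μ X Y f
      ≤ 4 * A * mesh A K := hcost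
    _ ≤ 4 * A * (4 * A / K) := by gcongr; exact mesh_le_four_mul_div hA hK
    _ = 16 * A ^ 2 / K := by ring

lemma optimal_squaredRisk_grid_sub_le [IsProbabilityMeasure μ] (hX : AEMeasurable X μ)
    (hY : AEMeasurable Y μ) (hA : 0 < A) (hYA : ∀ᵐ ω ∂μ, |Y ω| ≤ A) {K : ℕ} (hK : 2 ≤ K)
    (hz : ∀ i, z i ∈ grid A K) {r rK : ℝ}
    (hr : IsGLB (squaredRisk μ X Y '' constrainedPredictors (Set.Icc (-A) A) z 𝒞) r)
    (hrK : IsGLB (squaredRisk μ X Y '' constrainedPredictors (grid A K : Set ℝ) z 𝒞) rK) :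
    rK - r ≤ 16 * A ^ 2 / K := by
  rw [sub_le_comm, le_isGLB_iff hr]
  rintro _ ⟨f, hf, rfl⟩
  rw [sub_le_iff_le_add]
  exact (hrK.1 (Set.mem_image_of_mem _ (roundUp_comp_mem_constrainedPredictors hA hK hz hf))).trans
    (squaredRisk_roundUp_comp_le hX hY hA hYA hK hf.1 hf.2.1)

lemma optimal_squaredRisk_le_grid (hA : 0 < A) {K : ℕ} (hK : 2 ≤ K) {r rK : ℝ}
    (hr : IsGLB (squaredRisk μ X Y '' constrainedPredictors (Set.Icc (-A) A) z 𝒞) r)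
    (hrK : IsGLB (squaredRisk μ X Y '' constrainedPredictors (grid A K : Set ℝ) z 𝒞) rK) :
    r ≤ rK :=
  hrK.mono hr (Set.image_mono (constrainedPredictors_mono (grid_subset_Icc hA hK)))

end Risk

lemma tendsto_of_le_of_sub_le_const_div {u : ℕ → ℝ} {r c : ℝ} {s : Set ℕ}
    (hlower : ∀ n ∈ s, r ≤ u n) (hupper : ∀ n ∈ s, u n - r ≤ c / n) :
    Tendsto u (atTop ⊓ 𝓟 s) (nhds r) := by
  have hlim : Tendsto (fun n : ℕ => r + c / n) atTop (nhds r) := by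
    simpa only [add_zero] using (tendsto_const_div_atTop_nhds_zero_nat c).const_add r
  have hmem : ∀ᶠ n in atTop ⊓ 𝓟 s, n ∈ s := mem_inf_of_right (mem_principal_self s)
  exact tendsto_of_tendsto_of_tendsto_of_le_of_le' tendsto_const_nhds (hlim.mono_left inf_le_left)
    (hmem.mono hlower) (hmem.mono fun n hn => sub_le_iff_le_add'.1 (hupper n hn))

section Fairness

variable {Ω 𝒮 : Type*} [MeasurableSpace Ω] [MeasurableSpace 𝒮] {μ : Measure Ω} {d M : ℕ}
  {X : Ω → Fin d → ℝ} {S : Ω → 𝒮} {Y : Ω → ℝ} {ℓ z : Fin M → ℝ}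

/-- `(ℓ,𝒵)`-fairness as a condition on the sublevel sets `E m = {f ≤ z m} ⊆ ℝ^d × 𝒮`. -/
def fairness (μ : Measure Ω) (X : Ω → Fin d → ℝ) (S : Ω → 𝒮) (ℓ : Fin M → ℝ) :
    Set (Fin M → Set ((Fin d → ℝ) × 𝒮)) :=
  {E | ∀ s m, condProb μ S s {ω | (X ω, s) ∈ E m} = ℓ m}

lemma isGLB_squaredRisk_of_minimizer {V : Set ℝ} {f : (Fin d → ℝ) → 𝒮 → ℝ}
    (hf : Measurable (uncurry f)) (hfV : ∀ x s, f x s ∈ V)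
    (hfair : ∀ s m, condProb μ S s {ω | f (X ω) s ≤ z m} = ℓ m)
    (hmin : ∀ g : (Fin d → ℝ) → 𝒮 → ℝ, Measurable (uncurry g) → (∀ x s, g x s ∈ V) →
      (∀ s m, condProb μ S s {ω | g (X ω) s ≤ z m} = ℓ m) → risk μ X S Y f ≤ risk μ X S Y g) :
    IsGLB (squaredRisk μ (fun ω => (X ω, S ω)) Y ''
      constrainedPredictors V z (fairness μ X S ℓ)) (risk μ X S Y f) := by
  refine IsLeast.isGLB ⟨⟨uncurry f, ⟨hf, fun t => hfV t.1 t.2, hfair⟩, rfl⟩, ?_⟩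
  rintro _ ⟨g, ⟨hg, hgV, hgfair⟩, rfl⟩
  exact hmin (curry g) hg (fun x s => hgV (x, s)) hgfair

end Fairness

end FairReg

open FairReg in
theorem cost_of_discretization_general {Ω T ι : Type*} [MeasurableSpace Ω] [MeasurableSpace T]
    {μ : Measure Ω} [IsProbabilityMeasure μ] {X : Ω → T} {Y : Ω → ℝ} (hX : AEMeasurable X μ)
    (hY : AEMeasurable Y μ) {A : ℝ} (hA : 0 < A) (hYA : ∀ᵐ ω ∂μ, |Y ω| ≤ A)
    {z : ι → ℝ} {𝒞 : Set (ι → Set T)} {r : ℝ}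
    (hr : IsGLB (squaredRisk μ X Y '' constrainedPredictors (Set.Icc (-A) A) z 𝒞) r) :
    (∀ K : ℕ, 2 ≤ K → (∀ i, z i ∈ grid A K) → ∀ rK : ℝ,
      IsGLB (squaredRisk μ X Y '' constrainedPredictors (grid A K : Set ℝ) z 𝒞) rK →
      rK - r ≤ 16 * A ^ 2 / K) ∧
    ∀ R : ℕ → ℝ, (∀ K, 2 ≤ K → (∀ i, z i ∈ grid A K) →
      IsGLB (squaredRisk μ X Y '' constrainedPredictors (grid A K : Set ℝ) z 𝒞) (R K)) →
      Tendsto R (atTop ⊓ 𝓟 {K : ℕ | 2 ≤ K ∧ ∀ i, z i ∈ grid A K}) (nhds r) :=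
  ⟨fun _ hK hz _ hrK => optimal_squaredRisk_grid_sub_le hX hY hA hYA hK hz hr hrK,
    fun _ hR => tendsto_of_le_of_sub_le_const_div
      (fun K hK => optimal_squaredRisk_le_grid hA hK.1 hr (hR K hK.1 hK.2))
      (fun K hK => optimal_squaredRisk_grid_sub_le hX hY hA hYA hK.1 hK.2 hr (hR K hK.1 hK.2))⟩

/-- Cost of discretization. There is an absolute constant `C > 0` such that
the risk of the optimal `(ℓ,𝒵)`-fair discretized predictor exceeds the risk of the optimal
`(ℓ,𝒵)`-fair continuous predictor by at most `C A² / K`; in particular the former risk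
converges to the latter as `K → ∞` (along sizes `K` for which the thresholds belong to the
grid, as assumed). -/
theorem cost_of_discretization :
    ∃ C : ℝ, 0 < C ∧
      ∀ (Ω 𝒮 : Type) (_ : MeasurableSpace Ω) (_ : Fintype 𝒮) (_ : Nonempty 𝒮)
        (_ : MeasurableSpace 𝒮) (_ : MeasurableSingletonClass 𝒮)
        (μ : Measure Ω) (_ : IsProbabilityMeasure μ)
        (d : ℕ) (X : Ω → Fin d → ℝ) (S : Ω → 𝒮) (Y : Ω → ℝ),
        Measurable X → Measurable S → Measurable Y →
        ∀ (A : ℝ), 0 < A → (∀ᵐ ω ∂μ, |Y ω| ≤ A) →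
        (∀ s : 𝒮, 0 < (μ (S ⁻¹' {s})).toReal) →
        ∀ (M : ℕ) (ℓ : Fin M → ℝ) (z : Fin M → ℝ),
        1 ≤ M → (∀ m, ℓ m ∈ Set.Ioo (0 : ℝ) 1) → StrictMono ℓ → StrictMono z →
        -- `ftil = f̃` is a risk-minimizer over `(ℓ,𝒵)`-fair predictors in the
        -- continuous class `ℱ` (measurable, `[-A,A]`-valued)
        ∀ (ftil : (Fin d → ℝ) → 𝒮 → ℝ),
        Measurable (Function.uncurry ftil) →
        (∀ x s, ftil x s ∈ Set.Icc (-A) A) →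
        (∀ s m, FairReg.condProb μ S s {ω | ftil (X ω) s ≤ z m} = ℓ m) →
        (∀ g : (Fin d → ℝ) → 𝒮 → ℝ, Measurable (Function.uncurry g) →
          (∀ x s, g x s ∈ Set.Icc (-A) A) →
          (∀ s m, FairReg.condProb μ S s {ω | g (X ω) s ≤ z m} = ℓ m) →
          FairReg.risk μ X S Y ftil ≤ FairReg.risk μ X S Y g) →
        -- main bound: for every grid size `K` with thresholds on the grid, and every
        -- risk-minimizer `fK = f*_{(ℓ,𝒵)-fair}` over `(ℓ,𝒵)`-fair predictors in `ℱ_K`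
        (∀ (K : ℕ), 2 ≤ K → (∀ m, z m ∈ FairReg.grid A K) →
          ∀ (fK : (Fin d → ℝ) → 𝒮 → ℝ),
          Measurable (Function.uncurry fK) →
          (∀ x s, fK x s ∈ FairReg.grid A K) →
          (∀ s m, FairReg.condProb μ S s {ω | fK (X ω) s ≤ z m} = ℓ m) →
          (∀ g : (Fin d → ℝ) → 𝒮 → ℝ, Measurable (Function.uncurry g) →
            (∀ x s, g x s ∈ FairReg.grid A K) →
            (∀ s m, FairReg.condProb μ S s {ω | g (X ω) s ≤ z m} = ℓ m) →
            FairReg.risk μ X S Y fK ≤ FairReg.risk μ X S Y g) →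
          FairReg.risk μ X S Y fK - FairReg.risk μ X S Y ftil ≤ C * A ^ 2 / K)
        ∧
        -- consequence: `R(f*_{(ℓ,𝒵)-fair}) → R(f̃)` as `K → ∞`
        (∀ F : ℕ → (Fin d → ℝ) → 𝒮 → ℝ,
          (∀ K, 2 ≤ K → (∀ m, z m ∈ FairReg.grid A K) →
            Measurable (Function.uncurry (F K)) ∧
            (∀ x s, F K x s ∈ FairReg.grid A K) ∧
            (∀ s m, FairReg.condProb μ S s {ω | F K (X ω) s ≤ z m} = ℓ m) ∧
            (∀ g : (Fin d → ℝ) → 𝒮 → ℝ, Measurable (Function.uncurry g) →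
              (∀ x s, g x s ∈ FairReg.grid A K) →
              (∀ s m, FairReg.condProb μ S s {ω | g (X ω) s ≤ z m} = ℓ m) →
              FairReg.risk μ X S Y (F K) ≤ FairReg.risk μ X S Y g)) →
          Filter.Tendsto (fun K => FairReg.risk μ X S Y (F K))
            (Filter.atTop ⊓ Filter.principal
              {K : ℕ | 2 ≤ K ∧ ∀ m, z m ∈ FairReg.grid A K})
            (nhds (FairReg.risk μ X S Y ftil))) := by
  refine ⟨16, by norm_num, ?_⟩
  intro Ω 𝒮 _ _ _ _ _ μ _ d X S Y hX hS hY A hA hYA _ M ℓ z _ _ _ _ ftil hf hfA hfair hopt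
  obtain ⟨hbound, hlim⟩ := cost_of_discretization_general (hX.prodMk hS).aemeasurable
    hY.aemeasurable hA hYA (FairReg.isGLB_squaredRisk_of_minimizer hf hfA hfair hopt)
  refine ⟨fun K hK hz fK hfK hfKgrid hfKfair hfKopt => hbound K hK hz _
    (FairReg.isGLB_squaredRisk_of_minimizer hfK hfKgrid hfKfair hfKopt), fun F hF => hlim _ ?_⟩
  intro K hK hz
  obtain ⟨hFK, hFKgrid, hFKfair, hFKopt⟩ := hF K hK hz
  exact FairReg.isGLB_squaredRisk_of_minimizer hFK hFKgrid hFKfair hFKopt
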